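/- For every integer T ≥ 1 and every x ∈ ℝ^T, the progress of the gradient of the hard-instance chain function increases by at most one: prog_0(∇F_T(x)) ≤ prog_{1/2}(x) + 1. -/

import Mathlib

open MeasureTheory

/-- The scalar function `Ψ` of the hard-instance construction. -/
noncomputable def Psi (t : ℝ) : ℝ :=
  if t ≤ 1 / 2 then 0 else Real.exp (1 - 1 / (2 * t - 1) ^ 2)

/-- The scalar function `Φ(t) = √e ∫_{−∞}^t e^{−τ²/2} dτ` of the hard-instance
construction. -/
noncomputable def Phi (t : ℝ) : ℝ :=
  Real.sqrt (Real.exp 1) * ∫ τ in Set.Iic t, Real.exp (-τ ^ 2 / 2)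

/-- The hard-instance chain function `F_T` on `ℝ^{T+1}` (so the paper's dimension `T ≥ 1`
is `T + 1` here; the paper's coordinate `xᵢ`, `1 ≤ i ≤ T`, is the zero-based coordinate
`x (i−1)`). -/
noncomputable def chainF (T : ℕ) (x : EuclideanSpace ℝ (Fin (T + 1))) : ℝ :=
  -Psi 1 * Phi (x 0) +
    ∑ i : Fin T,
      (Psi (-(x i.castSucc)) * Phi (-(x i.succ)) - Psi (x i.castSucc) * Phi (x i.succ))

/-- `prog α x` is the largest one-based index `i ∈ {0, 1, …, n}` such that `|xᵢ| > α`
(with the paper's convention `x₀ ≡ 1`, so the value `0` is allowed and returned when no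
coordinate exceeds `α`). -/
noncomputable def prog {n : ℕ} (α : ℝ) (x : EuclideanSpace ℝ (Fin n)) : ℕ :=
  (Finset.univ.filter fun i : Fin n => α < |x i|).sup fun i => (i : ℕ) + 1

theorem Psi_zero_of_abs {t : ℝ} (h : |t| ≤ 1 / 2) : Psi t = 0 ∧ Psi (-t) = 0 := by
  rw [abs_le] at h
  unfold Psi
  constructor
  · rw [if_pos h.2]
  · rw [if_pos (by linarith)]

theorem chainF_const (T : ℕ) (x y : EuclideanSpace ℝ (Fin (T + 1))) (j : Fin (T + 1))
    (hj : j ≠ 0) (hxy : ∀ k, k ≠ j → y k = x k) (hx : |x j| ≤ 1 / 2) (hy : |y j| ≤ 1 / 2)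
    (hp : ∀ i : Fin T, i.succ = j → |x i.castSucc| ≤ 1 / 2) : chainF T y = chainF T x := by
  unfold chainF
  rw [hxy 0 hj.symm]
  congr 1
  refine Finset.sum_congr rfl fun i _ => ?_
  by_cases h1 : i.castSucc = j
  · rw [h1, (Psi_zero_of_abs hx).1, (Psi_zero_of_abs hx).2, (Psi_zero_of_abs hy).1,
      (Psi_zero_of_abs hy).2]
    simp
  · rw [hxy _ h1]
    by_cases h2 : i.succ = j
    · have h3 := Psi_zero_of_abs (hp i h2)
      rw [h3.1, h3.2]
      simp
    · rw [hxy _ h2]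

theorem chainF_grad_zero (T : ℕ) (x : EuclideanSpace ℝ (Fin (T + 1))) (j : Fin (T + 1))
    (hj : j ≠ 0) (hx : |x j| ≤ 1 / 2)
    (hp : ∀ i : Fin T, i.succ = j → |x i.castSucc| ≤ 1 / 2) :
    gradient (chainF T) x j = 0 := by
  by_cases hd : DifferentiableAt ℝ (chainF T) x
  swap
  · rw [gradient_eq_zero_of_not_differentiableAt hd]; rfl
  have e1 : gradient (chainF T) x j
      = fderiv ℝ (chainF T) x (EuclideanSpace.single j 1) := by
    have h := hd.hasGradientAt.hasFDerivAt.fderiv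
    rw [h, InnerProductSpace.toDual_apply_apply, EuclideanSpace.inner_single_right]
    simp
  rw [e1]
  set v : EuclideanSpace ℝ (Fin (T + 1)) := EuclideanSpace.single j 1 with hv
  have hl : HasDerivAt (fun s : ℝ => chainF T (x + s • v)) (fderiv ℝ (chainF T) x v) 0 :=
    hd.hasFDerivAt.hasLineDerivAt v
  have hxx := abs_le.1 hx
  set S : Set ℝ := Set.Icc (-(1 / 2) - x j) (1 / 2 - x j) with hS
  have h0 : (0 : ℝ) ∈ S := ⟨by linarith, by linarith⟩
  have hu : UniqueDiffWithinAt ℝ S 0 := uniqueDiffOn_Icc (by linarith) 0 h0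
  have hc : ∀ s ∈ S, chainF T (x + s • v) = chainF T x := by
    intro s hs
    refine chainF_const T x _ j hj ?_ hx ?_ hp
    · intro k hk
      simp [hv, hk]
    · have : (x + s • v) j = x j + s := by simp [hv]
      rw [this, abs_le]
      exact ⟨by linarith [hs.1], by linarith [hs.2]⟩
  have h2 : HasDerivWithinAt (fun s : ℝ => chainF T (x + s • v)) 0 S 0 :=
    (hasDerivWithinAt_const (0 : ℝ) S (chainF T x)).congr hc (hc 0 h0)
  exact hu.eq_deriv S hl.hasDerivWithinAt h2

theorem abs_le_of_prog {n : ℕ} (α : ℝ) (x : EuclideanSpace ℝ (Fin n)) (i : Fin n)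
    (h : prog α x ≤ i) : |x i| ≤ α := by
  by_contra hc
  have : (i : ℕ) + 1 ≤ prog α x :=
    Finset.le_sup (f := fun i : Fin n => (i : ℕ) + 1) (by simpa using hc)
  omega

/-- The chain function is a zero-chain:
`prog_0(∇F_T(x)) ≤ prog_{1/2}(x) + 1` for every `x` (stated for dimension `T + 1`,
i.e. for every paper dimension `T ≥ 1`). -/
theorem chainF_zero_chain (T : ℕ) :
    ∀ x : EuclideanSpace ℝ (Fin (T + 1)),
      prog 0 (gradient (chainF T) x) ≤ prog (1 / 2) x + 1 := by
  intro x
  unfold prog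
  refine Finset.sup_le fun j hj => ?_
  change (j : ℕ) + 1 ≤ prog (1 / 2) x + 1
  by_contra hlt
  have hlt' : prog (1 / 2) x + 1 ≤ (j : ℕ) := by omega
  have hz : gradient (chainF T) x j = 0 := by
    refine chainF_grad_zero T x j ?_ (abs_le_of_prog _ x j (by omega)) ?_
    · rintro rfl
      simp at hlt'
    · rintro i rfl
      refine abs_le_of_prog _ x _ ?_
      simpa using hlt'
  simp [hz] at hj
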